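/- arXiv:2509.06492 — 2 statements merged into one kernel-verified Lean document; each statement's English description precedes it below -/
import Mathlib

section
/- Let C_1, …, C_r be pairwise distinct cyclotomic cosets modulo q^t−1, with sizes s_1, …, s_r and representatives a_1, …, a_r. Then the family of polynomials {T_ℓ^{C_i} : 1 ≤ i ≤ r, 0 ≤ ℓ ≤ s_i−1} is linearly independent over B in F[X]. -/
/-- The cyclotomic coset of `i` modulo `q^t - 1` (with respect to `q`):
the orbit `{i * q^j mod (q^t - 1) : j ≥ 0}`. -/
def cycCoset (q t i : ℕ) : Set ℕ := {b : ℕ | ∃ j : ℕ, b = i * q ^ j % (q ^ t - 1)}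

/-- The polynomial `T_ℓ^C(X) = Σ_{j=0}^{s-1} ω^{ℓ q^j} X^{a q^j mod (q^t - 1)}`,
for a cyclotomic coset `C` of size `s` with representative `a`. -/
noncomputable def Tpoly (F : Type) [Field F] (q t : ℕ) (ω : F) (a s ℓ : ℕ) : Polynomial F :=
  ∑ j ∈ Finset.range s, Polynomial.C (ω ^ (ℓ * q ^ j)) * Polynomial.X ^ (a * q ^ j % (q ^ t - 1))

/-!
Every nonzero element of `F` is a power of `ω`, so `F = B(ω)` and the powers `ω ^ ℓ` with
`ℓ < t = [F : B]` are linearly independent over `B`. Taking the coefficient at the representative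
`a_i` sends `T_ℓ^{C_i}` to `ω ^ ℓ`, and kills every `T_ℓ^{C_k}` with `k ≠ i` because its exponents
lie in a coset disjoint from `C_i`. Since `|C_i| ≤ t`, a vanishing linear combination of the
polynomials must therefore be trivial on each coset separately.
-/

section LinearIndependence

theorem linearIndependent_sigma_of_separating {R M ι : Type*} {κ : ι → Type*} {N : ι → Type*}
    [Semiring R] [AddCommMonoid M] [Module R M] [∀ i, AddCommMonoid (N i)] [∀ i, Module R (N i)]
    {v : (Σ i, κ i) → M} (φ : ∀ i, M →ₗ[R] N i)
    (hdiag : ∀ i, LinearIndependent R fun l => φ i (v ⟨i, l⟩))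
    (hoff : ∀ i k l, i ≠ k → φ i (v ⟨k, l⟩) = 0) : LinearIndependent R v := by
  classical
  have hsingle : LinearMap.pi φ ∘ v = fun p => Pi.single p.1 (φ p.1 (v ⟨p.1, p.2⟩)) := by
    ext ⟨k, l⟩ i
    obtain rfl | hik := eq_or_ne i k
    · simp
    · simp [hik, hoff i k l hik]
  have hpi : LinearIndependent R (LinearMap.pi φ ∘ v) :=
    hsingle ▸ Pi.linearIndependent_single (fun i l => φ i (v ⟨i, l⟩)) hdiag
  exact hpi.of_comp

theorem linearIndependent_pow_of_adjoin_eq_top {K L : Type*} [Field K] [Field L] [Algebra K L]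
    [FiniteDimensional K L] {x : L} (hx : IntermediateField.adjoin K {x} = ⊤) :
    LinearIndependent K fun i : Fin (Module.finrank K L) => x ^ (i : ℕ) :=
  (Field.primitive_element_iff_minpoly_natDegree_eq K x).1 hx ▸ linearIndependent_pow x

theorem adjoin_eq_top_of_forall_eq_pow (K : Type*) {L : Type*} [Field K] [Field L] [Algebra K L]
    {x : L} (hx : ∀ y : L, y ≠ 0 → ∃ j : ℕ, y = x ^ j) : IntermediateField.adjoin K {x} = ⊤ := by
  refine eq_top_iff.2 fun y _ => ?_
  obtain rfl | hy := eq_or_ne y 0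
  · exact zero_mem _
  · obtain ⟨j, rfl⟩ := hx y hy
    exact pow_mem (IntermediateField.mem_adjoin_simple_self K x) j

end LinearIndependence

theorem ncard_range_le_of_periodic {α : Type*} {f : ℕ → α} {c : ℕ} (hf : Function.Periodic f c)
    (hc : 0 < c) : (Set.range f).ncard ≤ c := by
  have hrange : Set.range f ⊆ f '' Set.Iio c := by
    rintro _ ⟨j, rfl⟩
    exact ⟨j % c, Nat.mod_lt j hc, hf.map_mod_nat j⟩
  calc (Set.range f).ncard ≤ (f '' Set.Iio c).ncard :=
        Set.ncard_le_ncard hrange ((Set.finite_Iio c).image f)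
    _ ≤ (Set.Iio c).ncard := Set.ncard_image_le (Set.finite_Iio c)
    _ = c := by simp

theorem periodic_mul_pow_mod {n a q d : ℕ} (h : a * q ^ d ≡ a [MOD n]) :
    Function.Periodic (fun j => a * q ^ j % n) d := by
  intro j
  change a * q ^ (j + d) % n = a * q ^ j % n
  rw [add_comm j d, pow_add, ← mul_assoc]
  exact h.mul_right (q ^ j)

theorem mul_pow_mul_modEq_self {q : ℕ} (hq : 0 < q) (t a j : ℕ) :
    a * q ^ (t * j) ≡ a [MOD q ^ t - 1] := by
  simpa only [pow_mul, one_pow, mul_one] using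
    ((Nat.modEq_sub (Nat.one_le_pow t q hq)).pow j).mul_left a

section CyclotomicCoset

variable {q t a b : ℕ}

theorem ncard_cycCoset_le_of_modEq {d : ℕ} (hd : 0 < d) (h : a * q ^ d ≡ a [MOD q ^ t - 1]) :
    (cycCoset q t a).ncard ≤ d := by
  have hrange : cycCoset q t a = Set.range fun j => a * q ^ j % (q ^ t - 1) :=
    Set.ext fun b => exists_congr fun j => eq_comm
  exact hrange ▸ ncard_range_le_of_periodic (periodic_mul_pow_mod h) hd

theorem ncard_cycCoset_le (hq : 0 < q) (ht : 0 < t) : (cycCoset q t a).ncard ≤ t :=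
  ncard_cycCoset_le_of_modEq ht (by simpa only [mul_one] using mul_pow_mul_modEq_self hq t a 1)

theorem cycCoset_subset_of_mod_mem (h : a % (q ^ t - 1) ∈ cycCoset q t b) :
    cycCoset q t a ⊆ cycCoset q t b := by
  obtain ⟨j, hj⟩ := h
  rintro _ ⟨k, rfl⟩
  refine ⟨j + k, ?_⟩
  rw [pow_add, ← mul_assoc]
  exact Nat.ModEq.mul_right (q ^ k) hj

theorem mod_mem_cycCoset_symm (hq : 0 < q) (ht : 0 < t) (h : a % (q ^ t - 1) ∈ cycCoset q t b) :
    b % (q ^ t - 1) ∈ cycCoset q t a := by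
  obtain ⟨j, hj⟩ := h
  refine ⟨(t - 1) * j, ?_⟩
  have hexp : j + (t - 1) * j = t * j := by
    rw [← one_add_mul, add_comm, Nat.sub_one_add_one ht.ne']
  have hcycle : a * q ^ ((t - 1) * j) ≡ b [MOD q ^ t - 1] :=
    calc a * q ^ ((t - 1) * j) ≡ b * q ^ j * q ^ ((t - 1) * j) [MOD q ^ t - 1] :=
          Nat.ModEq.mul_right _ hj
      _ = b * q ^ (t * j) := by rw [mul_assoc, ← pow_add, hexp]
      _ ≡ b [MOD q ^ t - 1] := mul_pow_mul_modEq_self hq t b j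
  exact hcycle.symm

theorem cycCoset_eq_of_mod_mem (hq : 0 < q) (ht : 0 < t) (h : a % (q ^ t - 1) ∈ cycCoset q t b) :
    cycCoset q t a = cycCoset q t b :=
  (cycCoset_subset_of_mod_mem h).antisymm
    (cycCoset_subset_of_mod_mem (mod_mem_cycCoset_symm hq ht h))

end CyclotomicCoset

section Tpoly

variable {F : Type} [Field F] {q t a s n : ℕ}

theorem coeff_Tpoly (ω : F) (q t a s ℓ n : ℕ) :
    (Tpoly F q t ω a s ℓ).coeff n =
      ∑ j ∈ Finset.range s, if n = a * q ^ j % (q ^ t - 1) then ω ^ (ℓ * q ^ j) else 0 := by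
  simp only [Tpoly, Polynomial.finsetSum_coeff, Polynomial.coeff_C_mul_X_pow]

theorem coeff_Tpoly_eq_zero (ω : F) (s ℓ : ℕ) (hn : n ∉ cycCoset q t a) :
    (Tpoly F q t ω a s ℓ).coeff n = 0 := by
  rw [coeff_Tpoly]
  exact Finset.sum_eq_zero fun j _ => if_neg fun h => hn ⟨j, h⟩

theorem coeff_Tpoly_mod (ω : F) (ℓ : ℕ) (hs : 0 < s) (hcard : s ≤ (cycCoset q t a).ncard) :
    (Tpoly F q t ω a s ℓ).coeff (a % (q ^ t - 1)) = ω ^ ℓ := by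
  have hne : ∀ j ∈ Finset.range s, j ≠ 0 → a % (q ^ t - 1) ≠ a * q ^ j % (q ^ t - 1) := by
    intro j hj hj0 h
    have hle : (cycCoset q t a).ncard ≤ j :=
      ncard_cycCoset_le_of_modEq (Nat.pos_of_ne_zero hj0) h.symm
    exact (hcard.trans hle).not_gt (Finset.mem_range.1 hj)
  rw [coeff_Tpoly, Finset.sum_eq_single_of_mem 0 (Finset.mem_range.2 hs)
    fun j hj hj0 => if_neg (hne j hj hj0)]
  simp

end Tpoly

theorem stmt_8_general {q t : ℕ} (hq : 1 < q) (ht : 0 < t) {B ι : Type*} {F : Type}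
    [CommSemiring B] [Field F] [Algebra B F] {ω : F}
    (hω : LinearIndependent B fun ℓ : Fin t => ω ^ (ℓ : ℕ)) {a s : ι → ℕ}
    (hs : ∀ i, (cycCoset q t (a i)).ncard = s i)
    (hdist : Pairwise fun i j => cycCoset q t (a i) ≠ cycCoset q t (a j)) :
    LinearIndependent B
      (fun p : (Σ i, Fin (s i)) => Tpoly F q t ω (a p.1) (s p.1) (p.2 : ℕ)) := by
  have hq0 : 0 < q := Nat.zero_lt_of_lt hq
  refine linearIndependent_sigma_of_separating
    (fun i => (Polynomial.lcoeff F (a i % (q ^ t - 1))).restrictScalars B)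
    (fun i => ?_) (fun i k ℓ hik => ?_)
  · have hst : s i ≤ t := hs i ▸ ncard_cycCoset_le hq0 ht
    have hcoeff (ℓ : Fin (s i)) :
        (Tpoly F q t ω (a i) (s i) ℓ).coeff (a i % (q ^ t - 1)) = ω ^ (ℓ : ℕ) :=
      coeff_Tpoly_mod ω ℓ ℓ.pos (hs i).ge
    simpa only [LinearMap.coe_restrictScalars, Polynomial.lcoeff_apply, hcoeff,
      Function.comp_def, Fin.val_castLE] using
      hω.comp (Fin.castLE hst) (Fin.castLE_injective hst)
  · exact coeff_Tpoly_eq_zero ω (s k) ℓ fun h => hdist hik (cycCoset_eq_of_mod_mem hq0 ht h)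

theorem stmt_8 (q t : ℕ) (hq : ∃ p m : ℕ, p.Prime ∧ 0 < m ∧ q = p ^ m) (ht : 1 ≤ t)
    (B F : Type) [Field B] [Fintype B] [Field F] [Fintype F] [Algebra B F]
    (hB : Fintype.card B = q) (hrank : Module.finrank B F = t)
    (hF : Fintype.card F = q ^ t)
    (ω : F) (hω : ∀ x : F, x ≠ 0 → ∃ j : ℕ, x = ω ^ j)
    (r : ℕ) (a s : Fin r → ℕ)
    (ha : ∀ i, a i ≤ q ^ t - 2)
    (hs : ∀ i, (cycCoset q t (a i)).ncard = s i)
    (hdist : ∀ i j, i ≠ j → cycCoset q t (a i) ≠ cycCoset q t (a j)) :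
    LinearIndependent B
      (fun p : (Σ i : Fin r, Fin (s i)) => Tpoly F q t ω (a p.1) (s p.1) (p.2 : ℕ)) :=
  stmt_8_general (hB ▸ Fintype.one_lt_card) ht
    (hrank ▸ linearIndependent_pow_of_adjoin_eq_top (adjoin_eq_top_of_forall_eq_pow B hω)) hs hdist
end

section
/- Fix k with 2 ≤ k ≤ q^t. Then the dimension of W_k as a vector space over B equals Σ_{C ∈ Ξ_k^*} |C|. -/
/-- `Ξ_k^*`: the collection of cyclotomic cosets modulo `q^t - 1` all of whose
elements lie in `{2, 3, …, q^t - k}`. -/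
def XiStar (q t k : ℕ) : Set (Set ℕ) :=
  {C : Set ℕ | (∃ i : ℕ, i ≤ q ^ t - 2 ∧ C = cycCoset q t i) ∧ C ⊆ Set.Icc 2 (q ^ t - k)}

/-- The set `W_k` of vectors `c = (c_α)_{α ∈ F}` lying in the dual of `RS(F, k)`,
with `c_0 = 0` and `α · c_α ∈ B` for every `α ≠ 0`. -/
def WkSet (B F : Type) [Field B] [Field F] [Fintype F] [Algebra B F] (k : ℕ) :
    Set (F → F) :=
  {c : F → F |
    (∀ f : Polynomial F, f.degree < (k : WithBot ℕ) → ∑ α : F, c α * f.eval α = 0) ∧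
    c 0 = 0 ∧
    ∀ α : F, α ≠ 0 → ∃ b : B, α * c α = algebraMap B F b}

/-!
Write `c ∈ W_k` as `c_α = α⁻¹ u(α)` with `u : Fˣ → B`. The dual Reed–Solomon conditions
`∑ u(α) α^(d - 1) = 0`, `d < k`, say that the Fourier coefficients `û(i)` of `u` on the cyclic group
`Fˣ` vanish unless `i ∈ S = {2, …, q^t - k}`. Since `u` takes values in `B`, `û(q i) = û(i)^q`, so
the spectrum of `u` lies in fact in the union `J` of the cyclotomic cosets contained in `S`.
The `F`-space of functions `Fˣ → F` with spectrum in `J` has dimension `|J|`, and it is stable under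
Frobenius because `J` is stable under multiplication by `q`. By Galois descent its `B`-valued
elements form a `B`-space of the same dimension.
-/

section CyclotomicCosets

variable {q t : ℕ}

lemma mem_cycCoset_self {i : ℕ} (hi : i < q ^ t - 1) : i ∈ cycCoset q t i :=
  ⟨0, by rw [pow_zero, mul_one, Nat.mod_eq_of_lt hi]⟩

lemma lt_of_mem_cycCoset {i b : ℕ} (hqt : 1 < q ^ t) (hb : b ∈ cycCoset q t i) :
    b < q ^ t - 1 := by
  obtain ⟨j, rfl⟩ := hb
  exact Nat.mod_lt _ (Nat.sub_pos_of_lt hqt)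

lemma cycCoset_subset_of_mem {i b : ℕ} (hb : b ∈ cycCoset q t i) :
    cycCoset q t b ⊆ cycCoset q t i := by
  obtain ⟨j, rfl⟩ := hb
  rintro _ ⟨l, rfl⟩
  exact ⟨j + l, by rw [Nat.mod_mul_mod, mul_assoc, ← pow_add]⟩

lemma cycCoset_eq_of_mem {i b : ℕ} (hqt : 1 < q ^ t) (hb : b ∈ cycCoset q t i) :
    cycCoset q t b = cycCoset q t i := by
  refine (cycCoset_subset_of_mem hb).antisymm ?_
  obtain ⟨j, rfl⟩ := hb
  rintro _ ⟨l, rfl⟩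
  have ht : t ≠ 0 := by rintro rfl; simp at hqt
  obtain ⟨s, rfl⟩ := Nat.exists_eq_succ_of_ne_zero ht
  have h_period : q ^ (s + 1) ≡ 1 [MOD (q ^ (s + 1) - 1)] := Nat.modEq_sub hqt.le
  have h_return : i * q ^ l * (q ^ (s + 1)) ^ j ≡ i * q ^ l [MOD (q ^ (s + 1) - 1)] := by
    simpa using (h_period.pow j).mul_left (i * q ^ l)
  refine ⟨l + s * j, ?_⟩
  rw [Nat.mod_mul_mod, show i * q ^ j * q ^ (l + s * j) = i * q ^ l * (q ^ (s + 1)) ^ j by ring]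
  exact h_return.symm

/-- The largest subset of `S ∩ {0, …, q^t - 2}` stable under multiplication by `q` modulo
`q^t - 1`: the union of the cyclotomic cosets contained in `S`. -/
def cosetInterior (q t : ℕ) (S : Set ℕ) : Set ℕ :=
  {i | i < q ^ t - 1 ∧ cycCoset q t i ⊆ S}

lemma cosetInterior_subset (S : Set ℕ) : cosetInterior q t S ⊆ S :=
  fun _ hi ↦ hi.2 (mem_cycCoset_self hi.1)

lemma mem_cosetInterior_of_mem_cycCoset {S : Set ℕ} {i b : ℕ} (hqt : 1 < q ^ t)
    (hi : i < q ^ t - 1) (hb : b ∈ cycCoset q t i) (hbS : b ∈ cosetInterior q t S) :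
    i ∈ cosetInterior q t S :=
  ⟨hi, cycCoset_eq_of_mem hqt hb ▸ hbS.2⟩

lemma biUnion_cycCoset_subset (hqt : 1 < q ^ t) (S : Set ℕ) :
    ⋃ C ∈ {C | (∃ i ≤ q ^ t - 2, C = cycCoset q t i) ∧ C ⊆ S}, C = cosetInterior q t S := by
  ext x
  simp only [Set.mem_iUnion, Set.mem_ofPred_eq, exists_prop]
  constructor
  · rintro ⟨_, ⟨⟨i, -, rfl⟩, hS⟩, hx⟩
    exact ⟨lt_of_mem_cycCoset hqt hx, cycCoset_eq_of_mem hqt hx ▸ hS⟩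
  · rintro ⟨hx, hS⟩
    exact ⟨_, ⟨⟨x, by omega, rfl⟩, hS⟩, mem_cycCoset_self hx⟩

lemma finsum_ncard_cycCoset_subset (hqt : 1 < q ^ t) (S : Set ℕ) :
    ∑ᶠ C ∈ {C | (∃ i ≤ q ^ t - 2, C = cycCoset q t i) ∧ C ⊆ S}, C.ncard =
      (cosetInterior q t S).ncard := by
  rw [← biUnion_cycCoset_subset hqt S]
  refine (Set.Finite.ncard_biUnion ?_ ?_ ?_).symm
  · refine ((Set.finite_Iic (q ^ t - 2)).image (cycCoset q t)).subset ?_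
    rintro _ ⟨⟨i, hi, rfl⟩, -⟩
    exact ⟨i, hi, rfl⟩
  · rintro _ ⟨⟨i, -, rfl⟩, -⟩
    exact (Set.finite_Iio (q ^ t - 1)).subset fun _ hb ↦ lt_of_mem_cycCoset hqt hb
  · rintro _ ⟨⟨i, -, rfl⟩, -⟩ _ ⟨⟨j, -, rfl⟩, -⟩ hne
    refine Set.disjoint_left.2 fun x hxi hxj ↦ hne ?_
    exact (cycCoset_eq_of_mem hqt hxi).symm.trans (cycCoset_eq_of_mem hqt hxj)

end CyclotomicCosets

section GaloisDescent

variable {ι : Type*} (K : Type*) {L : Type*} [Field K] [Field L] [Algebra K L]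

/-- The subfield subcode of a linear code `V` over `L`: its codewords with all entries in `K`,
regarded as vectors over `K`. -/
def subfieldSubcode (V : Submodule L (ι → L)) : Submodule K (ι → K) :=
  (V.restrictScalars K).comap (Pi.algebraMap ι K L)

variable {K}

lemma mem_subfieldSubcode {V : Submodule L (ι → L)} {u : ι → K} :
    u ∈ subfieldSubcode K V ↔ algebraMap K L ∘ u ∈ V :=
  Iff.rfl

lemma finrank_span_image_algebraMap [Finite ι] (U : Submodule K (ι → K)) :
    Module.finrank L (Submodule.span L (Pi.algebraMap ι K L '' U)) = Module.finrank K U := by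
  let b := Module.finBasis K U
  have h_indep : LinearIndependent L fun i ↦ algebraMap K L ∘ (b i : ι → K) :=
    linearIndependent_algebraMap_comp_iff.2 (b.linearIndependent.map' U.subtype U.ker_subtype)
  have h_span : Submodule.span L (Pi.algebraMap ι K L '' U) =
      Submodule.span L (Set.range fun i ↦ algebraMap K L ∘ (b i : ι → K)) := by
    have hU : U = Submodule.span K (Set.range fun i ↦ (b i : ι → K)) := by
      have := congrArg (Submodule.map U.subtype) b.span_eq
      rwa [Submodule.map_span, Submodule.map_subtype_top, ← Set.range_comp, eq_comm] at this
    conv_lhs => rw [hU, ← Submodule.map_coe, Submodule.map_span, Submodule.span_span_of_tower,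
      ← Set.range_comp]
    rfl
  rw [h_span, finrank_span_eq_card h_indep, Fintype.card_fin]

variable [FiniteDimensional K L] [IsGalois K L]

lemma trace_comp_mem_subfieldSubcode {V : Submodule L (ι → L)}
    (hV : ∀ σ : Gal(L/K), ∀ f ∈ V, σ ∘ f ∈ V) {f : ι → L} (hf : f ∈ V) :
    Algebra.trace K L ∘ f ∈ subfieldSubcode K V := by
  have h_trace : algebraMap K L ∘ Algebra.trace K L ∘ f = ∑ σ : Gal(L/K), σ ∘ f := by
    ext x
    simp only [Function.comp_apply, trace_eq_sum_automorphisms, Finset.sum_apply]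
  rw [mem_subfieldSubcode, h_trace]
  exact Submodule.sum_mem _ fun σ _ ↦ hV σ f hf

lemma span_subfieldSubcode {V : Submodule L (ι → L)}
    (hV : ∀ σ : Gal(L/K), ∀ f ∈ V, σ ∘ f ∈ V) :
    Submodule.span L (Pi.algebraMap ι K L '' subfieldSubcode K V) = V := by
  refine le_antisymm (Submodule.span_le.2 (Set.image_subset_iff.2 fun u hu ↦ hu)) fun f hf ↦ ?_
  let e := Module.finBasis K L
  have h_expand : f = ∑ m, e.traceDual m • algebraMap K L ∘ Algebra.trace K L ∘ (e m • f) := by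
    ext x
    simpa [Algebra.smul_def, mul_comm] using (e.traceDual.sum_repr (f x)).symm
  rw [h_expand]
  refine Submodule.sum_mem _ fun m _ ↦ Submodule.smul_mem _ _ (Submodule.subset_span ?_)
  exact ⟨_, trace_comp_mem_subfieldSubcode hV (V.smul_mem (e m) hf), rfl⟩

lemma finrank_subfieldSubcode_of_galois_stable [Finite ι] {V : Submodule L (ι → L)}
    (hV : ∀ σ : Gal(L/K), ∀ f ∈ V, σ ∘ f ∈ V) :
    Module.finrank K (subfieldSubcode K V) = Module.finrank L V := by
  rw [← finrank_span_image_algebraMap (L := L), span_subfieldSubcode hV]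

end GaloisDescent

section FourierTransform

variable {F : Type*} [Field F] [Fintype F]

lemma units_pow_eq_of_modEq {i j : ℕ} (h : i ≡ j [MOD (Fintype.card F - 1)]) (x : Fˣ) :
    x ^ i = x ^ j := by
  classical
  rw [← Fintype.card_units] at h
  exact pow_eq_pow_iff_modEq.2 (h.of_dvd orderOf_dvd_card)

variable [DecidableEq F]

/-- The `i`-th Fourier coefficient of a function on `Fˣ`, normalised so that `x ↦ x ^ i` has
`i`-th coefficient `1`; the normalising factor `1 / |Fˣ|` is `-1` in `F`. -/
def unitsFourierCoeff (i : ℕ) : (Fˣ → F) →ₗ[F] F :=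
  -∑ x : Fˣ, ((x⁻¹ : Fˣ) : F) ^ i • LinearMap.proj x

lemma unitsFourierCoeff_apply (i : ℕ) (f : Fˣ → F) :
    unitsFourierCoeff i f = -∑ x : Fˣ, ((x⁻¹ : Fˣ) : F) ^ i * f x := by
  simp [unitsFourierCoeff]

lemma unitsFourierCoeff_mod (i : ℕ) (f : Fˣ → F) :
    unitsFourierCoeff (i % (Fintype.card F - 1)) f = unitsFourierCoeff i f := by
  simp only [unitsFourierCoeff_apply, ← Units.val_pow_eq_pow_val,
    units_pow_eq_of_modEq (Nat.mod_modEq i _)]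

lemma unitsFourierCoeff_pow {i j : ℕ} (hi : i < Fintype.card F - 1) (hj : j < Fintype.card F - 1) :
    unitsFourierCoeff i (fun x : Fˣ ↦ (x : F) ^ j) = if i = j then 1 else 0 := by
  set N := Fintype.card F - 1
  have h_summand (x : Fˣ) : ((x⁻¹ : Fˣ) : F) ^ i * (x : F) ^ j = (x : F) ^ (j + (N - i)) := by
    have h_unit : x⁻¹ ^ i * x ^ j = x ^ (j + (N - i)) := by
      rw [inv_pow, inv_mul_eq_iff_eq_mul, ← pow_add]
      refine units_pow_eq_of_modEq ?_ x
      rw [show i + (j + (N - i)) = j + N by omega]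
      exact Nat.ModEq.symm (Nat.add_modEq_right ..)
    exact_mod_cast congrArg Units.val h_unit
  have h_dvd : N ∣ j + (N - i) ↔ i = j := by
    refine ⟨fun h ↦ ?_, fun h ↦ ⟨1, by omega⟩⟩
    have := Nat.eq_of_dvd_of_lt_two_mul (by omega) h (by omega)
    omega
  simp only [unitsFourierCoeff_apply, h_summand, FiniteField.sum_pow_units, N, h_dvd]
  split_ifs <;> simp

lemma map_unitsFourierCoeff (σ : F →+* F) {m : ℕ} (hσ : ∀ x, σ x = x ^ m) (i : ℕ) (f : Fˣ → F) :
    σ (unitsFourierCoeff i f) = unitsFourierCoeff (i * m) (σ ∘ f) := by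
  simp only [unitsFourierCoeff_apply, map_neg, map_sum, map_mul, map_pow, Function.comp_apply,
    mul_comm i m, pow_mul, ← hσ]

/-- The functions on `Fˣ` with spectrum in `S`: all Fourier coefficients with index in
`{0, …, |F| - 2} \ S` vanish. -/
def bandLimited (F : Type*) [Field F] [Fintype F] [DecidableEq F] (S : Set ℕ) :
    Submodule F (Fˣ → F) :=
  (LinearMap.pi fun i : ↥(Set.Iio (Fintype.card F - 1) \ S) ↦ unitsFourierCoeff (i : ℕ)).ker

lemma mem_bandLimited {S : Set ℕ} {f : Fˣ → F} :
    f ∈ bandLimited F S ↔ ∀ i < Fintype.card F - 1, i ∉ S → unitsFourierCoeff i f = 0 := by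
  simp [bandLimited, funext_iff]

lemma finrank_bandLimited (S : Set ℕ) :
    Module.finrank F (bandLimited F S) = (Set.Iio (Fintype.card F - 1) ∩ S).ncard := by
  classical
  set T := Set.Iio (Fintype.card F - 1) \ S with hT
  have : Fintype T := ((Set.finite_Iio _).sdiff).fintype
  let φ : (Fˣ → F) →ₗ[F] (T → F) := LinearMap.pi fun i ↦ unitsFourierCoeff (i : ℕ)
  have h_surj : Function.Surjective φ := fun g ↦ by
    refine ⟨∑ j : T, g j • fun x : Fˣ ↦ (x : F) ^ (j : ℕ), ?_⟩
    ext i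
    have h_dual (j : T) : unitsFourierCoeff (i : ℕ) (fun x : Fˣ ↦ (x : F) ^ (j : ℕ)) =
        if i = j then 1 else 0 := by
      simp only [unitsFourierCoeff_pow i.2.1 j.2.1, Subtype.val_inj]
    simp [φ, h_dual]
  have h_rank := φ.finrank_range_add_finrank_ker
  rw [LinearMap.range_eq_top.2 h_surj, finrank_top, Module.finrank_fintype_fun_eq_card,
    Module.finrank_fintype_fun_eq_card, Fintype.card_units, ← Nat.card_eq_fintype_card,
    Nat.card_coe_set_eq] at h_rank
  have h_split := Set.ncard_inter_add_ncard_sdiff_eq_ncard (Set.Iio (Fintype.card F - 1)) S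
  rw [← hT, Set.ncard_Iio_nat] at h_split
  change Module.finrank F φ.ker = _
  omega

end FourierTransform

section CyclotomicSpectrum

variable (B F : Type*) [Field B] [Fintype B] [Field F] [Algebra B F]

lemma one_lt_card_pow_finrank [Finite F] : 1 < Fintype.card B ^ Module.finrank B F :=
  Nat.one_lt_pow Module.finrank_pos.ne' Fintype.one_lt_card

variable {F} [Fintype F] [DecidableEq F]

lemma map_frobenius_pow_unitsFourierCoeff (n i : ℕ) (f : Fˣ → F) :
    (FiniteField.frobeniusAlgEquivOfAlgebraic B F ^ n) (unitsFourierCoeff i f) =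
      unitsFourierCoeff (i * Fintype.card B ^ n % (Fintype.card F - 1))
        (⇑(FiniteField.frobeniusAlgEquivOfAlgebraic B F ^ n) ∘ f) := by
  rw [unitsFourierCoeff_mod]
  refine map_unitsFourierCoeff (m := Fintype.card B ^ n)
    ((FiniteField.frobeniusAlgEquivOfAlgebraic B F ^ n : Gal(F/B)) : F →+* F) (fun x ↦ ?_) i f
  change (FiniteField.frobeniusAlgEquivOfAlgebraic B F ^ n) x = _
  rw [AlgEquiv.coe_pow, FiniteField.coe_frobeniusAlgEquivOfAlgebraic_iterate]

variable {B}

lemma exists_mem_cycCoset_map_unitsFourierCoeff (σ : Gal(F/B)) (i : ℕ) :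
    ∃ b ∈ cycCoset (Fintype.card B) (Module.finrank B F) i,
      ∀ f : Fˣ → F, σ (unitsFourierCoeff i f) = unitsFourierCoeff b (σ ∘ f) := by
  obtain ⟨n, rfl⟩ := (FiniteField.bijective_frobeniusAlgEquivOfAlgebraic_pow B F).2 σ
  refine ⟨_, ⟨n, rfl⟩, fun f ↦ ?_⟩
  rw [← Module.card_eq_pow_finrank]
  exact map_frobenius_pow_unitsFourierCoeff B n i f

lemma exists_map_unitsFourierCoeff_of_mem_cycCoset {i b : ℕ}
    (hb : b ∈ cycCoset (Fintype.card B) (Module.finrank B F) i) :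
    ∃ σ : Gal(F/B), ∀ f : Fˣ → F, σ (unitsFourierCoeff i f) = unitsFourierCoeff b (σ ∘ f) := by
  obtain ⟨n, rfl⟩ := hb
  refine ⟨FiniteField.frobeniusAlgEquivOfAlgebraic B F ^ n, fun f ↦ ?_⟩
  rw [← Module.card_eq_pow_finrank]
  exact map_frobenius_pow_unitsFourierCoeff B n i f

lemma comp_mem_bandLimited_cosetInterior (S : Set ℕ) (σ : Gal(F/B)) {f : Fˣ → F}
    (hf : f ∈ bandLimited F (cosetInterior (Fintype.card B) (Module.finrank B F) S)) :
    σ ∘ f ∈ bandLimited F (cosetInterior (Fintype.card B) (Module.finrank B F) S) := by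
  have hqt := one_lt_card_pow_finrank B F
  rw [mem_bandLimited] at hf ⊢
  intro i hi hiS
  obtain ⟨b, hb, hσ⟩ := exists_mem_cycCoset_map_unitsFourierCoeff σ⁻¹ i
  rw [Module.card_eq_pow_finrank (K := B)] at hi hf
  have h_zero : unitsFourierCoeff b f = 0 :=
    hf b (lt_of_mem_cycCoset hqt hb) fun hbS ↦ hiS (mem_cosetInterior_of_mem_cycCoset hqt hi hb hbS)
  have h_cancel : ⇑σ⁻¹ ∘ σ ∘ f = f := funext fun x ↦ σ.symm_apply_apply (f x)
  -- Evaluating `σ⁻¹` rather than `σ` moves the index `i` forward within its coset.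
  rwa [← map_eq_zero_iff σ⁻¹ (EquivLike.injective _), hσ, h_cancel]

lemma subfieldSubcode_bandLimited (S : Set ℕ) :
    subfieldSubcode B (bandLimited F S) =
      subfieldSubcode B
        (bandLimited F (cosetInterior (Fintype.card B) (Module.finrank B F) S)) := by
  have hqt := one_lt_card_pow_finrank B F
  ext u
  simp only [mem_subfieldSubcode, mem_bandLimited]
  refine ⟨fun h i hi hiS ↦ ?_, fun h i hi hiS ↦ h i hi fun hiJ ↦ hiS (cosetInterior_subset S hiJ)⟩
  rw [Module.card_eq_pow_finrank (K := B)] at hi h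
  obtain ⟨b, hb, hbS⟩ : ∃ b ∈ cycCoset (Fintype.card B) (Module.finrank B F) i, b ∉ S :=
    Set.not_subset.1 fun h_sub ↦ hiS ⟨hi, h_sub⟩
  obtain ⟨σ, hσ⟩ := exists_map_unitsFourierCoeff_of_mem_cycCoset hb
  have h_fixed : σ ∘ algebraMap B F ∘ u = algebraMap B F ∘ u := funext fun x ↦ σ.commutes (u x)
  rw [← map_eq_zero_iff σ (EquivLike.injective _), hσ, h_fixed, h b (lt_of_mem_cycCoset hqt hb) hbS]

theorem finrank_subfieldSubcode_bandLimited (S : Set ℕ) :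
    Module.finrank B (subfieldSubcode B (bandLimited F S)) =
      (cosetInterior (Fintype.card B) (Module.finrank B F) S).ncard := by
  rw [subfieldSubcode_bandLimited, finrank_subfieldSubcode_of_galois_stable fun σ _ hf ↦
    comp_mem_bandLimited_cosetInterior S σ hf, finrank_bandLimited,
    Module.card_eq_pow_finrank (K := B), Set.inter_eq_right.2 fun _ hi ↦ hi.1]

end CyclotomicSpectrum

section PowerMoments

lemma forall_sum_mul_eval_eq_zero_iff {R ι : Type*} [CommSemiring R] [Fintype ι] {k : ℕ}
    {c v : ι → R} :
    (∀ f : Polynomial R, f.degree < k → ∑ i, c i * f.eval (v i) = 0) ↔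
      ∀ d < k, ∑ i, c i * v i ^ d = 0 := by
  constructor
  · intro h d hd
    have h_degree : (Polynomial.X ^ d : Polynomial R).degree < k :=
      (Polynomial.degree_X_pow_le d).trans_lt (by exact_mod_cast hd)
    simpa using h _ h_degree
  · intro h f hf
    simp only [Polynomial.eval_eq_sum, Polynomial.sum_def, Finset.mul_sum]
    rw [Finset.sum_comm]
    refine Finset.sum_eq_zero fun d hd ↦ ?_
    have hdk : d < k := by exact_mod_cast (Polynomial.le_degree_of_mem_supp d hd).trans_lt hf
    simp only [mul_left_comm _ (f.coeff d), ← Finset.mul_sum, h d hdk, mul_zero]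

lemma notMem_Icc_iff_exists_add_modEq_one {k n i : ℕ} (hk : 2 ≤ k) (hi : i < n - 1) :
    i ∉ Set.Icc 2 (n - k) ↔ ∃ d < k, i + d ≡ 1 [MOD (n - 1)] := by
  constructor
  · intro h
    rw [Set.mem_Icc] at h
    rcases i.lt_or_ge 2 with h_small | h_large
    · exact ⟨1 - i, by omega, by rw [Nat.add_sub_cancel' (by omega)]⟩
    · refine ⟨n - i, by omega, ?_⟩
      rw [show i + (n - i) = 1 + (n - 1) by omega]
      exact Nat.add_modEq_right
  · rintro ⟨d, hd, h_mod⟩ ⟨h_lower, h_upper⟩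
    have h_dvd := (Nat.modEq_iff_dvd' (by omega)).1 h_mod.symm
    have := Nat.le_of_dvd (by omega) h_dvd
    omega

lemma exists_lt_add_modEq {n : ℕ} (hn : 0 < n) (d m : ℕ) : ∃ i < n, i + d ≡ m [MOD n] := by
  refine ⟨(m + (n - 1) * d) % n, Nat.mod_lt _ hn, ?_⟩
  obtain ⟨n, rfl⟩ := Nat.exists_eq_succ_of_ne_zero hn.ne'
  refine ((Nat.mod_modEq _ _).add_right d).trans ?_
  rw [show m + (n + 1 - 1) * d + d = m + (n + 1) * d by
    rw [Nat.add_sub_cancel]; ring]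
  exact Nat.add_modulus_mul_modEq_iff.2 rfl

variable {F : Type*} [Field F] [Fintype F] [DecidableEq F]

lemma sum_inv_mul_mul_pow {i d : ℕ} (h : i + d ≡ 1 [MOD (Fintype.card F - 1)]) (f : Fˣ → F) :
    ∑ x : Fˣ, ((x⁻¹ : Fˣ) : F) * f x * (x : F) ^ d = -unitsFourierCoeff i f := by
  rw [unitsFourierCoeff_apply, neg_neg]
  refine Finset.sum_congr rfl fun x _ ↦ ?_
  have h_unit : x⁻¹ * x ^ d = x⁻¹ ^ i := by
    rw [inv_pow, eq_inv_iff_mul_eq_one, mul_assoc, ← pow_add, add_comm d,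
      units_pow_eq_of_modEq h, pow_one, inv_mul_cancel]
  rw [← Units.val_pow_eq_pow_val, ← Units.val_pow_eq_pow_val, ← h_unit, Units.val_mul]
  ring

lemma mem_bandLimited_Icc_iff {k : ℕ} (hk : 2 ≤ k) {f : Fˣ → F} :
    f ∈ bandLimited F (Set.Icc 2 (Fintype.card F - k)) ↔
      ∀ d < k, ∑ x : Fˣ, ((x⁻¹ : Fˣ) : F) * f x * (x : F) ^ d = 0 := by
  rw [mem_bandLimited]
  constructor
  · intro h d hd
    have h_order : 0 < Fintype.card F - 1 := Nat.sub_pos_of_lt Fintype.one_lt_card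
    obtain ⟨i, hi, h_mod⟩ := exists_lt_add_modEq h_order d 1
    have hiS := (notMem_Icc_iff_exists_add_modEq_one hk hi).2 ⟨d, hd, h_mod⟩
    rw [sum_inv_mul_mul_pow h_mod, h i hi hiS, neg_zero]
  · intro h i hi hiS
    obtain ⟨d, hd, h_mod⟩ := (notMem_Icc_iff_exists_add_modEq_one hk hi).1 hiS
    rw [← neg_eq_zero, ← sum_inv_mul_mul_pow h_mod, h d hd]

end PowerMoments

section InvMulExtend

variable {B F : Type*} [Field B] [Field F] [Algebra B F]

/-- The vector `c` with `α * c α = u α` for `α ≠ 0` and `c 0 = 0`: the parametrisation of `W_k`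
by functions `Fˣ → B`. -/
noncomputable def invMulExtend : (Fˣ → B) →ₗ[B] (F → F) :=
  (Function.ExtendByZero.linearMap F Units.val).restrictScalars B ∘ₗ
    LinearMap.pi fun x : Fˣ ↦ ((x⁻¹ : Fˣ) : F) • (Algebra.linearMap B F ∘ₗ LinearMap.proj x)

lemma invMulExtend_units (u : Fˣ → B) (x : Fˣ) :
    invMulExtend u (x : F) = ((x⁻¹ : Fˣ) : F) * algebraMap B F (u x) := by
  simp [invMulExtend, Units.val_injective.extend_apply]

lemma invMulExtend_zero (u : Fˣ → B) : invMulExtend u (0 : F) = 0 := by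
  simp [invMulExtend, Function.extend_apply']

lemma mul_invMulExtend_units (u : Fˣ → B) (x : Fˣ) :
    (x : F) * invMulExtend u (x : F) = algebraMap B F (u x) := by
  rw [invMulExtend_units, Units.mul_inv_cancel_left]

lemma invMulExtend_injective : Function.Injective (invMulExtend : (Fˣ → B) →ₗ[B] (F → F)) := by
  intro u v huv
  funext x
  apply (algebraMap B F).injective
  rw [← mul_invMulExtend_units, ← mul_invMulExtend_units, huv]

lemma mem_range_invMulExtend_iff {c : F → F} :
    c ∈ Set.range (invMulExtend : (Fˣ → B) →ₗ[B] (F → F)) ↔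
      c 0 = 0 ∧ ∀ α, α ≠ 0 → ∃ b : B, α * c α = algebraMap B F b := by
  constructor
  · rintro ⟨u, rfl⟩
    exact ⟨invMulExtend_zero u, fun α hα ↦ ⟨_, mul_invMulExtend_units u (Units.mk0 α hα)⟩⟩
  · rintro ⟨h_zero, h_mul⟩
    choose u hu using fun x : Fˣ ↦ h_mul x x.ne_zero
    refine ⟨u, funext fun α ↦ ?_⟩
    rcases eq_or_ne α 0 with rfl | hα
    · rw [invMulExtend_zero, h_zero]
    · exact mul_left_cancel₀ hα <|
        (mul_invMulExtend_units u (Units.mk0 α hα)).trans (hu (Units.mk0 α hα)).symm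

variable [Fintype F] [DecidableEq F]

lemma sum_invMulExtend_mul (u : Fˣ → B) (g : F → F) :
    ∑ α, invMulExtend u α * g α =
      ∑ x : Fˣ, ((x⁻¹ : Fˣ) : F) * algebraMap B F (u x) * g x := by
  refine (Fintype.sum_of_injective Units.val Units.val_injective _ _ (fun α hα ↦ ?_)
    fun x ↦ by rw [invMulExtend_units]).symm
  have : α = 0 := not_not.1 fun h ↦ hα ⟨Units.mk0 α h, rfl⟩
  rw [this, invMulExtend_zero, zero_mul]

end InvMulExtend

lemma coe_map_invMulExtend (B F : Type) [Field B] [Field F] [Fintype F] [DecidableEq F]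
    [Algebra B F] {k : ℕ} (hk : 2 ≤ k) :
    ((subfieldSubcode B (bandLimited F (Set.Icc 2 (Fintype.card F - k)))).map invMulExtend :
      Set (F → F)) = WkSet B F k := by
  have h_mem (u : Fˣ → B) :
      u ∈ subfieldSubcode B (bandLimited F (Set.Icc 2 (Fintype.card F - k))) ↔
      ∀ f : Polynomial F, f.degree < k → ∑ α, invMulExtend u α * f.eval α = 0 := by
    refine Iff.trans ?_ (forall_sum_mul_eval_eq_zero_iff (v := fun α : F ↦ α)).symm
    simp only [mem_subfieldSubcode, mem_bandLimited_Icc_iff hk, sum_invMulExtend_mul,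
      Function.comp_apply]
  ext c
  constructor
  · rintro ⟨u, hu, rfl⟩
    exact ⟨(h_mem u).1 hu, mem_range_invMulExtend_iff.1 ⟨u, rfl⟩⟩
  · rintro ⟨h_dual, h_range⟩
    obtain ⟨u, rfl⟩ := mem_range_invMulExtend_iff.2 h_range
    exact ⟨u, (h_mem u).2 h_dual, rfl⟩

theorem stmt_10 (q t k : ℕ) (hq : ∃ p m : ℕ, p.Prime ∧ 0 < m ∧ q = p ^ m) (ht : 1 ≤ t)
    (hk2 : 2 ≤ k) (hk : k ≤ q ^ t)
    (B F : Type) [Field B] [Fintype B] [Field F] [Fintype F] [Algebra B F]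
    (hB : Fintype.card B = q) (hrank : Module.finrank B F = t)
    (hF : Fintype.card F = q ^ t) :
    ∀ W : Submodule B (F → F), (W : Set (F → F)) = WkSet B F k →
      Module.finrank B W = ∑ᶠ C ∈ XiStar q t k, C.ncard := by
  classical
  intro W hW
  obtain rfl : W = (subfieldSubcode B (bandLimited F (Set.Icc 2 (q ^ t - k)))).map invMulExtend :=
    SetLike.coe_injective (hW.trans (hF ▸ (coe_map_invMulExtend B F hk2).symm))
  have hqt : 1 < q ^ t := hF ▸ Fintype.one_lt_card
  calc
    _ = Module.finrank B (subfieldSubcode B (bandLimited F (Set.Icc 2 (q ^ t - k)))) :=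
      (Submodule.equivMapOfInjective _ invMulExtend_injective _).finrank_eq.symm
    _ = (cosetInterior q t (Set.Icc 2 (q ^ t - k))).ncard := by
      rw [finrank_subfieldSubcode_bandLimited, hB, hrank]
    _ = _ := (finsum_ncard_cycCoset_subset hqt _).symm
end
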